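/- Let n be a nonnegative bounded solution of the Kompaneets equation with initial data n₀ satisfying x² n₀(x) → 0 as x → ∞. Then for any 0 ≤ s ≤ t, lim_{x→0⁺} ∫ₛᵗ J(x, n(·,τ)) dτ = ∫ₛᵗ n(0,τ)² dτ. If moreover 0 < s ≤ t, then the stronger convergences hold: lim_{x→0⁺} ∫ₛᵗ x² |∂ₓ n(x,τ)| dτ = 0 and lim_{x→0⁺} ∫ₛᵗ |J(x, n(·,τ)) − n(0,τ)²| dτ = 0. -/

import Mathlib

/-!
The transport part of the flux converges by dominated convergence, so everything reduces to
`∫ₛᵗ x² |∂ₓ n(x,τ)| dτ → 0` as `x → 0⁺`, which is proved for all `0 ≤ s ≤ t`.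

Near a point `(x₀, t₀)` put `x = x₀ exp (ρ Y)`, `t = t₀ + ρ² T` with `ρ ≤ x₀`. The equation becomes
`n_T = n_YY + β n_Y + f` with `β` bounded and `f = O(ρ²)`, uniformly in `x₀ → 0`, and `n_Y` equals
`ρ x₀ ∂ₓ n` at the base point (`IsKompSol.isParabolic_rescaled`). An interior gradient estimate at
unit scale therefore controls `x² ∂ₓ n`. Because the derivatives of a solution are only known to
exist pointwise, that estimate (`IsParabolic.gradient_le`) is obtained by doubling the space
variable in the maximum principle instead of differentiating the equation.

Two consequences are used. The bound `0 ≤ n ≤ M` alone gives `x² |∂ₓ n| ≤ C (1 + x / √t)`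
(`IsKompSol.deriv_bound`), hence integrability in time and a uniformly small contribution from
times near `0`. Combined with a barrier that propagates smallness from the time slice `t - x²`
(`IsParabolic.upper_bound`), it gives `x² |∂ₓ n(x,t)| ≤ C (osc + x)`, where `osc` is the
oscillation of `n(·, t - x²)` on `(0, 2x)` (`IsKompSol.deriv_le_osc`). Since `n(·,τ)` has a limit
at `0` for each `τ > 0`, this oscillation tends to `0` pointwise and boundedly in `τ`, so its time
integral tends to `0`; the shift by `x²` is harmless after a change of variables.
-/

open MeasureTheory Filter Set Real Topology

/-- The Kompaneets photon flux `J(x,u) = x² u'(x) + (x² - 2x) u(x) + u(x)²`. -/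
noncomputable def kompFlux (u : ℝ → ℝ) (x : ℝ) : ℝ :=
  x ^ 2 * deriv u x + (x ^ 2 - 2 * x) * u x + u x ^ 2

/-- A (global-in-time) nonnegative solution of the Kompaneets equation
`∂ₜ n = ∂ₓ J(x, n(·,t))` on `(0,∞) × (0,∞)` with initial data `n₀`:
nonnegative, bounded, `C^{2,1}` in the interior, attaining the initial data,
continuous into `L¹`, and with `x² n → 0` and `x² ∂ₓ n → 0` as `x → ∞`,
uniformly on the indicated time sets.  No boundary condition at `x = 0`. -/
structure IsKompSol (n : ℝ → ℝ → ℝ) (n₀ : ℝ → ℝ) : Prop where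
  nonneg : ∀ x t : ℝ, 0 < x → 0 < t → 0 ≤ n x t
  bounded : ∃ M : ℝ, ∀ x t : ℝ, 0 < x → 0 < t → n x t ≤ M
  init : ∀ x : ℝ, 0 < x → n x 0 = n₀ x
  contOn : ContinuousOn (fun p : ℝ × ℝ => n p.1 p.2)
    ((Set.Ioi (0:ℝ)) ×ˢ (Set.Ioi (0:ℝ)))
  diff_x : ∀ t : ℝ, 0 < t → ∀ x : ℝ, 0 < x → DifferentiableAt ℝ (fun y => n y t) x
  diff_xx : ∀ t : ℝ, 0 < t → ∀ x : ℝ, 0 < x →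
    DifferentiableAt ℝ (deriv (fun y => n y t)) x
  diff_t : ∀ x : ℝ, 0 < x → ∀ t : ℝ, 0 < t → DifferentiableAt ℝ (fun τ => n x τ) t
  pde : ∀ x : ℝ, 0 < x → ∀ t : ℝ, 0 < t →
    deriv (fun τ => n x τ) t = deriv (fun y => kompFlux (fun z => n z t) y) x
  l1init : Filter.Tendsto (fun t => ∫ x in Set.Ioi (0:ℝ), |n x t - n₀ x|)
    (𝓝[>] (0:ℝ)) (nhds 0)
  decay : ∀ T : ℝ, 0 < T → ∀ ε : ℝ, 0 < ε → ∃ R : ℝ, 0 < R ∧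
    ∀ x : ℝ, R ≤ x → ∀ t : ℝ, 0 ≤ t → t < T → x ^ 2 * n x t < ε
  decay' : ∀ T : ℝ, 0 < T → ∀ ε : ℝ, 0 < ε → ∃ R : ℝ, 0 < R ∧
    ∀ x : ℝ, R ≤ x → ∀ t : ℝ, 1 / x ^ 2 ≤ t → t < T →
      |x ^ 2 * deriv (fun y => n y t) x| < ε

/-! ### Derivative tests at a maximum -/

lemma second_deriv_nonpos_of_isLocalMax {f f' : ℝ → ℝ} {f'' x : ℝ} (hmax : IsLocalMax f x)
    (hf : ∀ᶠ y in 𝓝 x, HasDerivAt f (f' y) y) (hf' : HasDerivAt f' f'' x) : f'' ≤ 0 := by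
  by_contra! hpos
  have hE : deriv f =ᶠ[𝓝 x] f' := hf.mono fun y hy => hy.deriv
  have h2 : deriv (deriv f) x = f'' := by rw [hE.deriv_eq, hf'.deriv]
  have hmin : IsLocalMin f x := isLocalMin_of_deriv_deriv_pos (by rw [h2]; exact hpos)
    hmax.deriv_eq_zero hf.self_of_nhds.continuousAt
  -- A point that is both a local maximum and a local minimum makes `f` locally constant.
  have hconst : f =ᶠ[𝓝 x] fun _ => f x := by
    filter_upwards [hmax, hmin] with y h1 h2 using le_antisymm h1 h2
  have hz : deriv f =ᶠ[𝓝 x] fun _ => 0 := by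
    filter_upwards [hconst.eventuallyEq_nhds] with y hy
    rw [hy.deriv_eq]; simp
  have : deriv (deriv f) x = 0 := by rw [hz.deriv_eq]; simp
  linarith

/-- A one-sided test: a maximum over the past forces a nonnegative time derivative. -/
lemma deriv_nonneg_of_left_max {f : ℝ → ℝ} {f' a x : ℝ} (hax : a < x) (hf : HasDerivAt f f' x)
    (hmax : ∀ y ∈ Icc a x, f y ≤ f x) : 0 ≤ f' := by
  have h := (hasDerivAt_iff_tendsto_slope_left_right.1 hf).1
  refine ge_of_tendsto h ?_
  filter_upwards [Ioo_mem_nhdsLT hax] with y hy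
  rw [slope_def_field]
  exact div_nonneg_of_nonpos (by linarith [hmax y ⟨hy.1.le, hy.2.le⟩]) (by linarith [hy.2])

/-! ### Pointwise parabolic inequalities on a box -/

/-- The function `u(X,T)` is continuous on the box `[-R,R] × [-1,0]`, has there the separate
partial derivatives `ux`, `uxx`, `ut`, and satisfies `|ut - uxx| ≤ B |ux| + F`.
No continuity of the derivatives is required. -/
structure IsParabolic (u ux uxx ut : ℝ → ℝ → ℝ) (R B F : ℝ) : Prop where
  cont : ContinuousOn (fun p : ℝ × ℝ => u p.1 p.2) (Icc (-R) R ×ˢ Icc (-1) 0)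
  dx : ∀ X ∈ Icc (-R) R, ∀ T ∈ Icc (-1 : ℝ) 0, HasDerivAt (fun y => u y T) (ux X T) X
  dxx : ∀ X ∈ Icc (-R) R, ∀ T ∈ Icc (-1 : ℝ) 0, HasDerivAt (fun y => ux y T) (uxx X T) X
  dt : ∀ X ∈ Icc (-R) R, ∀ T ∈ Icc (-1 : ℝ) 0, HasDerivAt (fun τ => u X τ) (ut X T) T
  ineq : ∀ X ∈ Icc (-R) R, ∀ T ∈ Icc (-1 : ℝ) 0,
    |ut X T - uxx X T| ≤ B * |ux X T| + F

lemma IsParabolic.neg {u ux uxx ut : ℝ → ℝ → ℝ} {R B F : ℝ}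
    (h : IsParabolic u ux uxx ut R B F) :
    IsParabolic (fun X T => -u X T) (fun X T => -ux X T) (fun X T => -uxx X T)
      (fun X T => -ut X T) R B F where
  cont := h.cont.neg
  dx X hX T hT := (h.dx X hX T hT).neg
  dxx X hX T hT := (h.dxx X hX T hT).neg
  dt X hX T hT := (h.dt X hX T hT).neg
  ineq X hX T hT := by
    have := h.ineq X hX T hT
    rw [abs_neg, ← abs_neg]
    convert this using 2
    ring

lemma IsParabolic.mono {u ux uxx ut : ℝ → ℝ → ℝ} {R R' B F : ℝ}
    (h : IsParabolic u ux uxx ut R B F) (hR : R' ≤ R) : IsParabolic u ux uxx ut R' B F := by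
  have hs : Icc (-R') R' ⊆ Icc (-R) R := Icc_subset_Icc (by linarith) hR
  exact ⟨h.cont.mono (prod_mono hs le_rfl), fun X hX => h.dx X (hs hX),
    fun X hX => h.dxx X (hs hX), fun X hX => h.dt X (hs hX), fun X hX => h.ineq X (hs hX)⟩

/-- Smallness at the initial time spreads to the inner box: the quadratic barrier
`M X² / R²` absorbs the lateral boundary, at a cost of order `M / R`. -/
lemma IsParabolic.upper_bound {u ux uxx ut : ℝ → ℝ → ℝ} {R B F M ε : ℝ}
    (h : IsParabolic u ux uxx ut R B F) (hR : 1 ≤ R) (hB : 0 ≤ B) (hF : 0 ≤ F) (hM : 0 < M)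
    (hε : 0 ≤ ε)
    (hu : ∀ X ∈ Icc (-R) R, ∀ T ∈ Icc (-1 : ℝ) 0, u X T ≤ M)
    (hi : ∀ X ∈ Icc (-R) R, u X (-1) ≤ ε) :
    ∀ X ∈ Icc (-1 : ℝ) 1, ∀ T ∈ Icc (-1 : ℝ) 0, u X T ≤ ε + F + (4 + 2 * B) * M / R := by
  have hR0 : 0 < R := by linarith
  set k : ℝ := F + (3 + 2 * B) * (M / R) with hk
  have hMR : 0 < M / R := by positivity
  have hMR2 : M / R ^ 2 ≤ M / R := by
    apply div_le_div_of_nonneg_left hM.le hR0; nlinarith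
  have hMR2' : 0 < M / R ^ 2 := by positivity
  have hk0 : 0 ≤ k := by positivity
  set Φ : ℝ × ℝ → ℝ := fun p => u p.1 p.2 - (ε + M / R ^ 2 * p.1 ^ 2 + k * (p.2 + 1)) with hΦ
  have hc : ContinuousOn Φ (Icc (-R) R ×ˢ Icc (-1) 0) := by
    refine h.cont.sub (Continuous.continuousOn ?_)
    fun_prop
  obtain ⟨⟨X, T⟩, hmem, hmax⟩ := (isCompact_Icc.prod isCompact_Icc).exists_isMaxOn
    ⟨((0 : ℝ), (0 : ℝ)), ⟨⟨by linarith, by linarith⟩, by norm_num⟩⟩ hc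
  obtain ⟨hX, hT⟩ : X ∈ Icc (-R) R ∧ T ∈ Icc (-1 : ℝ) 0 := hmem
  have hm : ∀ x ∈ Icc (-R) R, ∀ t ∈ Icc (-1 : ℝ) 0, Φ (x, t) ≤ Φ (X, T) :=
    fun x hx t ht => hmax (show (x, t) ∈ _ from ⟨hx, ht⟩)
  have key : Φ (X, T) ≤ 0 := by
    by_contra! hpos
    have hpos' : 0 < u X T - (ε + M / R ^ 2 * X ^ 2 + k * (T + 1)) := hpos
    have hkT : 0 ≤ k * (T + 1) := mul_nonneg hk0 (by linarith [hT.1])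
    have hTn : -1 < T := by
      rcases hT.1.lt_or_eq with h1 | h1
      · exact h1
      · have := hi X hX
        rw [← h1] at hpos'
        have : 0 ≤ M / R ^ 2 * X ^ 2 := by positivity
        linarith
    have hedge : X ^ 2 ≠ R ^ 2 := by
      intro h1
      have h2 := hu X hX T hT
      have : M / R ^ 2 * X ^ 2 = M := by rw [h1]; field_simp
      linarith
    have hX1 : -R < X := lt_of_le_of_ne hX.1 fun h1 => hedge (by rw [← h1]; ring)
    have hX2 : X < R := lt_of_le_of_ne hX.2 fun h1 => hedge (by rw [h1])
    have hnear : ∀ᶠ x in 𝓝 X, x ∈ Icc (-R) R := by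
      filter_upwards [Ioo_mem_nhds hX1 hX2] with x hx using ⟨hx.1.le, hx.2.le⟩
    have hloc : IsLocalMax (fun x => Φ (x, T)) X := by
      filter_upwards [hnear] with x hx using hm x hx T hT
    have hd1 : ∀ x ∈ Icc (-R) R,
        HasDerivAt (fun x => Φ (x, T)) (ux x T - M / R ^ 2 * (2 * x)) x := by
      intro x hx
      have := (h.dx x hx T hT).sub
        (((((hasDerivAt_id x).pow 2).const_mul (M / R ^ 2)).const_add ε).add_const (k * (T + 1)))
      refine this.congr_deriv ?_
      simp
    have e1 : ux X T - M / R ^ 2 * (2 * X) = 0 := hloc.hasDerivAt_eq_zero (hd1 X hX)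
    have e2 : uxx X T - M / R ^ 2 * 2 ≤ 0 := by
      refine second_deriv_nonpos_of_isLocalMax hloc (hnear.mono fun x hx => hd1 x hx) ?_
      have := (h.dxx X hX T hT).sub (((hasDerivAt_id X).const_mul 2).const_mul (M / R ^ 2))
      refine this.congr_deriv ?_
      simp
    have e3 : 0 ≤ ut X T - k := by
      refine deriv_nonneg_of_left_max hTn (f := fun t => Φ (X, t)) ?_
        fun t ht => hm X hX t ⟨ht.1, ht.2.trans hT.2⟩
      have := (h.dt X hX T hT).sub
        ((((hasDerivAt_id T).add_const 1).const_mul k).const_add (ε + M / R ^ 2 * X ^ 2))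
      refine this.congr_deriv ?_
      simp
    have e4 := (abs_le.1 (h.ineq X hX T hT)).2
    have e5 : |ux X T| ≤ 2 * (M / R) := by
      have : ux X T = M / R ^ 2 * (2 * X) := by linarith
      rw [this, abs_mul, abs_mul, abs_of_pos hMR2', abs_of_pos (by norm_num : (0:ℝ) < 2)]
      have hXa : |X| ≤ R := abs_le.2 hX
      calc M / R ^ 2 * (2 * |X|) ≤ M / R ^ 2 * (2 * R) := by gcongr
        _ = 2 * (M / R) := by field_simp
    have e6 : B * |ux X T| ≤ B * (2 * (M / R)) := by gcongr
    have : k = F + (3 + 2 * B) * (M / R) := rfl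
    nlinarith
  intro x hx t ht
  have h1 := (hm x ⟨by linarith [hx.1], by linarith [hx.2]⟩ t ht).trans key
  have h2 : u x t - (ε + M / R ^ 2 * x ^ 2 + k * (t + 1)) ≤ 0 := h1
  have h3 : M / R ^ 2 * x ^ 2 ≤ M / R := by
    have : x ^ 2 ≤ 1 := by nlinarith [hx.1, hx.2]
    nlinarith
  have h4 : k * (t + 1) ≤ k := by nlinarith [ht.2]
  have h5 : (4 + 2 * B) * M / R = M / R + (3 + 2 * B) * (M / R) := by ring
  linarith

set_option maxHeartbeats 1000000 in
/-- One-sided interior gradient bound. The maximum principle is applied to the doubled function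
`u(X,T) - u(Y,T) - L ((X-Y) - c (X-Y)²) - 2ε (X² + Y² - T)`. Moving `X` and `Y` in opposite
directions at a maximum exposes the concavity of the modulus, which beats the drift; hence
only first and second pointwise derivatives of `u` enter. -/
lemma IsParabolic.gradient_le {u ux uxx ut : ℝ → ℝ → ℝ} {B F ε : ℝ}
    (h : IsParabolic u ux uxx ut 1 B F) (hB : 0 ≤ B) (hF : 0 ≤ F) (hε : 0 < ε)
    (hu : ∀ X ∈ Icc (-1 : ℝ) 1, ∀ T ∈ Icc (-1 : ℝ) 0, |u X T| ≤ ε) :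
    ux 0 0 ≤ 4 * (B + 1) * ε + F := by
  set L : ℝ := 4 * (B + 1) * ε + F with hL
  set c : ℝ := (B + 1) / 2 with hc
  set δ : ℝ := 1 / (B + 1) with hδ
  have hL0 : 0 ≤ L := by positivity
  have hc0 : 0 < c := by positivity
  have hδ0 : 0 < δ := by positivity
  have hδ1 : δ ≤ 1 := by rw [hδ, div_le_one (by linarith)]; linarith
  have hcδ : c * δ = 1 / 2 := by rw [hc, hδ]; field_simp
  have hψδ : 2 * ε ≤ L * (δ - c * δ ^ 2) := by
    have h1 : δ - c * δ ^ 2 = δ / 2 := by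
      have : c * δ ^ 2 = (c * δ) * δ := by ring
      rw [this, hcδ]; ring
    have h2 : 4 * (B + 1) * ε * (δ / 2) = 2 * ε := by rw [hδ]; field_simp; norm_num
    rw [h1, ← h2]
    exact mul_le_mul_of_nonneg_right (by linarith) (by positivity)
  set Φ : ℝ × ℝ × ℝ → ℝ := fun p => u p.1 p.2.2 - u p.2.1 p.2.2
    - (L * ((p.1 - p.2.1) - c * (p.1 - p.2.1) ^ 2)
      + 2 * ε * (p.1 ^ 2 + p.2.1 ^ 2 - p.2.2)) with hΦ
  set S : Set (ℝ × ℝ × ℝ) := (Icc (-1) 1 ×ˢ (Icc (-1) 1 ×ˢ Icc (-1) 0)) ∩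
    {p | p.1 - p.2.1 ∈ Icc 0 δ} with hS
  have hScpt : IsCompact S := by
    refine (isCompact_Icc.prod (isCompact_Icc.prod isCompact_Icc)).inter_right ?_
    exact isClosed_Icc.preimage (by fun_prop)
  have hΦc : ContinuousOn Φ S := by
    refine ContinuousOn.sub (ContinuousOn.sub ?_ ?_) (Continuous.continuousOn (by fun_prop))
    · exact h.cont.comp (f := fun p : ℝ × ℝ × ℝ => (p.1, p.2.2))
        (Continuous.continuousOn (by fun_prop)) fun p hp => ⟨hp.1.1, hp.1.2.2⟩
    · exact h.cont.comp (f := fun p : ℝ × ℝ × ℝ => (p.2.1, p.2.2))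
        (Continuous.continuousOn (by fun_prop)) fun p hp => ⟨hp.1.2.1, hp.1.2.2⟩
  obtain ⟨⟨X, Y, T⟩, hmem, hmax⟩ := hScpt.exists_isMaxOn
    ⟨((0 : ℝ), (0 : ℝ), (0 : ℝ)), ⟨⟨by norm_num, by norm_num, by norm_num⟩,
      by simp [hδ0.le]⟩⟩ hΦc
  obtain ⟨⟨hX, hY, hT⟩, hs⟩ : (X ∈ Icc (-1 : ℝ) 1 ∧ Y ∈ Icc (-1 : ℝ) 1 ∧ T ∈ Icc (-1 : ℝ) 0) ∧
    X - Y ∈ Icc 0 δ := hmem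
  have hm : ∀ x ∈ Icc (-1 : ℝ) 1, ∀ y ∈ Icc (-1 : ℝ) 1, ∀ t ∈ Icc (-1 : ℝ) 0,
      x - y ∈ Icc 0 δ → Φ (x, y, t) ≤ Φ (X, Y, T) :=
    fun x hx y hy t ht hxy => hmax (show (x, y, t) ∈ S from ⟨⟨hx, hy, ht⟩, hxy⟩)
  have key : Φ (X, Y, T) ≤ 0 := by
    by_contra! hpos
    have hpos' : 0 < u X T - u Y T - (L * ((X - Y) - c * (X - Y) ^ 2)
      + 2 * ε * (X ^ 2 + Y ^ 2 - T)) := hpos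
    have hosc : u X T - u Y T ≤ 2 * ε := by
      have h1 := (abs_le.1 (hu X hX T hT)).2
      have h2 := (abs_le.1 (hu Y hY T hT)).1
      linarith
    have hψ0 : 0 ≤ L * ((X - Y) - c * (X - Y) ^ 2) := by
      refine mul_nonneg hL0 ?_
      have : c * (X - Y) ≤ 1 / 2 := by
        rw [← hcδ]; exact mul_le_mul_of_nonneg_left hs.2 hc0.le
      nlinarith [hs.1]
    have hpen : ¬ (1 ≤ X ^ 2 + Y ^ 2 - T) := by
      intro h1
      have : 2 * ε * 1 ≤ 2 * ε * (X ^ 2 + Y ^ 2 - T) := by gcongr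
      linarith
    have hpen0 : 0 ≤ 2 * ε * (X ^ 2 + Y ^ 2 - T) :=
      mul_nonneg (by linarith) (by nlinarith [hT.2, sq_nonneg X, sq_nonneg Y])
    have hT1 : -1 < T := by
      rcases hT.1.lt_or_eq with h1 | h1
      · exact h1
      · exact absurd (by rw [← h1]; nlinarith [sq_nonneg X, sq_nonneg Y]) hpen
    have hX2 : X ^ 2 < 1 := by
      by_contra! h1; exact hpen (by nlinarith [hT.2, sq_nonneg Y])
    have hY2 : Y ^ 2 < 1 := by
      by_contra! h1; exact hpen (by nlinarith [hT.2, sq_nonneg X])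
    have hX3 := abs_lt.1 ((sq_lt_one_iff_abs_lt_one X).1 hX2)
    have hY3 := abs_lt.1 ((sq_lt_one_iff_abs_lt_one Y).1 hY2)
    have hs1 : 0 < X - Y := by
      rcases hs.1.lt_or_eq with h1 | h1
      · exact h1
      · have : X = Y := by linarith
        rw [this] at hpos' hpen0
        simp only [sub_self] at hpos'
        norm_num at hpos'
        linarith
    have hs2 : X - Y < δ := by
      refine lt_of_le_of_ne hs.2 fun h1 => ?_
      rw [h1] at hpos'
      linarith
    have hXn : Ioo (-1 : ℝ) 1 ∈ 𝓝 X := Ioo_mem_nhds hX3.1 hX3.2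
    have hYn : Ioo (-1 : ℝ) 1 ∈ 𝓝 Y := Ioo_mem_nhds hY3.1 hY3.2
    have hsn : Ioo 0 δ ∈ 𝓝 (X - Y) := Ioo_mem_nhds hs1 hs2
    have hIoo : ∀ {a b x : ℝ}, x ∈ Ioo a b → x ∈ Icc a b := fun hx => ⟨hx.1.le, hx.2.le⟩
    -- First-order condition in `X`.
    have e1 : ux X T - (L * (1 - c * (2 * (X - Y))) + 2 * ε * (2 * X)) = 0 := by
      refine IsLocalMax.hasDerivAt_eq_zero (f := fun x => Φ (x, Y, T)) (a := X) ?_ ?_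
      · have hcont : Tendsto (fun x : ℝ => x - Y) (𝓝 X) (𝓝 (X - Y)) :=
          Continuous.tendsto (by fun_prop) X
        filter_upwards [hXn, hcont hsn] with x hx hx'
        exact hm x (hIoo hx) Y hY T hT (hIoo hx')
      · have hd := (hasDerivAt_id X).sub_const Y
        have := ((h.dx X hX T hT).sub_const (u Y T)).sub
          (((hd.sub ((hd.pow 2).const_mul c)).const_mul L).add
            (((((hasDerivAt_id X).pow 2).add_const (Y ^ 2)).sub_const T).const_mul (2 * ε)))
        refine this.congr_deriv ?_
        simp
    -- First-order condition in `Y`.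
    have e2 : -ux Y T - (L * (-1 + c * (2 * (X - Y))) + 2 * ε * (2 * Y)) = 0 := by
      refine IsLocalMax.hasDerivAt_eq_zero (f := fun y => Φ (X, y, T)) (a := Y) ?_ ?_
      · have hcont : Tendsto (fun y : ℝ => X - y) (𝓝 Y) (𝓝 (X - Y)) :=
          Continuous.tendsto (by fun_prop) Y
        filter_upwards [hYn, hcont hsn] with y hy hy'
        exact hm X hX y (hIoo hy) T hT (hIoo hy')
      · have hd := (hasDerivAt_id Y).const_sub X
        have := ((h.dx Y hY T hT).const_sub (u X T)).sub
          (((hd.sub ((hd.pow 2).const_mul c)).const_mul L).add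
            (((((hasDerivAt_id Y).pow 2).const_add (X ^ 2)).sub_const T).const_mul (2 * ε)))
        refine this.congr_deriv ?_
        simp
    -- Second-order condition along the direction `(1, -1)`.
    have e3 : uxx X T - uxx Y T - (L * (-(c * 8)) + 2 * ε * 4) ≤ 0 := by
      have hXt : Tendsto (fun z : ℝ => X + z) (𝓝 0) (𝓝 X) :=
        (Continuous.tendsto (by fun_prop) 0).trans (by simp)
      have hYt : Tendsto (fun z : ℝ => Y - z) (𝓝 0) (𝓝 Y) :=
        (Continuous.tendsto (by fun_prop) 0).trans (by simp)
      have hst : Tendsto (fun z : ℝ => (X + z) - (Y - z)) (𝓝 0) (𝓝 (X - Y)) := hXt.sub hYt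
      refine second_deriv_nonpos_of_isLocalMax (f := fun z => Φ (X + z, Y - z, T)) (x := 0)
        (f' := fun z => ux (X + z) T + ux (Y - z) T - (L * (2 - c * (4 * ((X + z) - (Y - z))))
          + 2 * ε * (2 * (X + z) - 2 * (Y - z)))) ?_ ?_ ?_
      · filter_upwards [hXt hXn, hYt hYn, hst hsn] with z h1 h2 h3
        simpa using hm _ (hIoo h1) _ (hIoo h2) T hT (hIoo h3)
      · filter_upwards [hXt hXn, hYt hYn] with z h1 h2
        have hp := (hasDerivAt_id z).const_add X
        have hq := (hasDerivAt_id z).const_sub Y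
        have a1 := (h.dx _ (hIoo h1) T hT).comp z hp
        have a2 := (h.dx _ (hIoo h2) T hT).comp z hq
        have hd := hp.sub hq
        have := (a1.sub a2).sub (((hd.sub ((hd.pow 2).const_mul c)).const_mul L).add
            ((((hp.pow 2).add (hq.pow 2)).sub_const T).const_mul (2 * ε)))
        refine this.congr_deriv ?_
        simp
        ring
      · have hp := (hasDerivAt_id (0 : ℝ)).const_add X
        have hq := (hasDerivAt_id (0 : ℝ)).const_sub Y
        have a1 : HasDerivAt (fun z => ux (X + z) T) (uxx X T * 1) 0 :=
          HasDerivAt.comp (h₂ := fun y => ux y T) 0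
            (by simpa using h.dxx X hX T hT) hp
        have a2 : HasDerivAt (fun z => ux (Y - z) T) (uxx Y T * (-1)) 0 :=
          HasDerivAt.comp (h₂ := fun y => ux y T) 0
            (by simpa using h.dxx Y hY T hT) hq
        have hd := hp.sub hq
        have := (a1.add a2).sub (((((hd.const_mul 4).const_mul c).const_sub 2).const_mul L).add
            (((hp.const_mul 2).sub (hq.const_mul 2)).const_mul (2 * ε)))
        refine this.congr_deriv ?_
        ring
    have e4 : 0 ≤ ut X T - ut Y T - 2 * ε * (-1) := by
      refine deriv_nonneg_of_left_max hT1 (f := fun t => Φ (X, Y, t)) ?_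
        fun t ht => hm X hX Y hY t ⟨ht.1, ht.2.trans hT.2⟩ hs
      have := ((h.dt X hX T hT).sub (h.dt Y hY T hT)).sub
        ((((hasDerivAt_id T).const_sub (X ^ 2 + Y ^ 2)).const_mul (2 * ε)).const_add
          (L * ((X - Y) - c * (X - Y) ^ 2)))
      exact this
    have e5 := (abs_le.1 (h.ineq X hX T hT)).2
    have e6 := (abs_le.1 (h.ineq Y hY T hT)).1
    have hψ1 : 0 ≤ L * (1 - c * (2 * (X - Y))) := by
      refine mul_nonneg hL0 ?_
      have : c * (X - Y) ≤ 1 / 2 := by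
        rw [← hcδ]; exact mul_le_mul_of_nonneg_left hs.2 hc0.le
      linarith
    have hψ2 : L * (1 - c * (2 * (X - Y))) ≤ L :=
      mul_le_of_le_one_right hL0 (by nlinarith [mul_nonneg hc0.le hs.1])
    have hXε := mul_lt_mul_of_pos_left hX3.2 hε
    have hXε' := mul_lt_mul_of_pos_left hX3.1 hε
    have hYε := mul_lt_mul_of_pos_left hY3.2 hε
    have hYε' := mul_lt_mul_of_pos_left hY3.1 hε
    have e7 : |ux X T| ≤ L + 4 * ε := by
      rw [abs_le]; constructor <;> linarith
    have e8 : |ux Y T| ≤ L + 4 * ε := by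
      rw [abs_le]; constructor <;> linarith
    have e9 : B * |ux X T| ≤ B * (L + 4 * ε) := by gcongr
    have e10 : B * |ux Y T| ≤ B * (L + 4 * ε) := by gcongr
    have e11 : L * (-(c * 8)) = -4 * (B + 1) * L := by rw [hc]; ring
    have e12 : 0 ≤ -4 * (B + 1) * L + 10 * ε + 2 * B * L + 8 * B * ε + 2 * F := by linarith
    have e13 : -4 * (B + 1) * L + 2 * B * L = -(2 * B + 4) * L := by ring
    have e14 : (2 * B + 4) * L = 8 * B ^ 2 * ε + 24 * B * ε + 16 * ε + 2 * B * F + 4 * F := by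
      rw [hL]; ring
    have : 0 ≤ B ^ 2 * ε := by positivity
    have : 0 ≤ B * ε := by positivity
    have : 0 ≤ B * F := by positivity
    linarith
  have hz : (0 : ℝ) ∈ Icc (-1 : ℝ) 1 := by norm_num
  have hz' : (0 : ℝ) ∈ Icc (-1 : ℝ) 0 := by norm_num
  have hlim := (hasDerivAt_iff_tendsto_slope_left_right.1 (h.dx 0 hz 0 hz')).2
  have hlim2 : Tendsto (fun x : ℝ => L + 2 * ε * x) (𝓝[>] 0) (𝓝 L) := by
    have : Tendsto (fun x : ℝ => L + 2 * ε * x) (𝓝 0) (𝓝 (L + 2 * ε * 0)) :=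
      Continuous.tendsto (by fun_prop) 0
    rw [mul_zero, add_zero] at this
    exact this.mono_left nhdsWithin_le_nhds
  refine le_of_tendsto_of_tendsto hlim hlim2 ?_
  filter_upwards [Ioo_mem_nhdsGT hδ0] with x hx
  have h1 := (hm x ⟨by linarith [hx.1], by linarith [hx.2]⟩ 0 hz 0 hz'
    (by rw [sub_zero]; exact ⟨hx.1.le, hx.2.le⟩)).trans key
  have h2 : u x 0 - u 0 0 - (L * ((x - 0) - c * (x - 0) ^ 2)
      + 2 * ε * (x ^ 2 + 0 ^ 2 - 0)) ≤ 0 := h1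
  rw [slope_def_field, sub_zero, div_le_iff₀ hx.1]
  have : 0 ≤ L * c * x ^ 2 := by positivity
  nlinarith

lemma IsParabolic.abs_gradient_le {u ux uxx ut : ℝ → ℝ → ℝ} {B F ε : ℝ}
    (h : IsParabolic u ux uxx ut 1 B F) (hB : 0 ≤ B) (hF : 0 ≤ F) (hε : 0 < ε)
    (hu : ∀ X ∈ Icc (-1 : ℝ) 1, ∀ T ∈ Icc (-1 : ℝ) 0, |u X T| ≤ ε) :
    |ux 0 0| ≤ 4 * (B + 1) * ε + F := by
  refine abs_le.2 ⟨?_, h.gradient_le hB hF hε hu⟩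
  have := h.neg.gradient_le hB hF hε (by simpa only [abs_neg] using hu)
  linarith

/-! ### Gradient estimates for the Kompaneets equation -/

/-- The equation with the flux differentiated out. -/
lemma IsKompSol.pde_expanded {n : ℝ → ℝ → ℝ} {n₀ : ℝ → ℝ} (hsol : IsKompSol n n₀) {x t : ℝ}
    (hx : 0 < x) (ht : 0 < t) :
    deriv (fun τ => n x τ) t = x ^ 2 * deriv (deriv fun y => n y t) x
      + (x ^ 2 + 2 * n x t) * deriv (fun y => n y t) x + (2 * x - 2) * n x t := by
  rw [hsol.pde x hx t ht]
  have h1 := (hsol.diff_x t ht x hx).hasDerivAt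
  have h2 := (hsol.diff_xx t ht x hx).hasDerivAt
  have hid := hasDerivAt_id x
  have := ((((hid.pow 2).mul h2).add (((hid.pow 2).sub (hid.const_mul 2)).mul h1)).add (h1.pow 2))
  have h3 : HasDerivAt (fun y => kompFlux (fun z => n z t) y) _ x := this
  rw [h3.deriv]
  simp
  ring

lemma half_lt_exp_and_exp_lt_two {r : ℝ} (hr : |r| ≤ 1 / 2) : 1 / 2 < exp r ∧ exp r < 2 := by
  have hlog := Real.log_two_gt_d9
  obtain ⟨h1, h2⟩ := abs_le.1 hr
  constructor
  · have : exp (-log 2) < exp r := exp_lt_exp.2 (by linarith)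
    rwa [exp_neg, exp_log (by norm_num), ← one_div] at this
  · have : exp r < exp (log 2) := exp_lt_exp.2 (by linarith)
    rwa [exp_log (by norm_num)] at this

/-- In the variables `x = x₀ exp (ρ Y)`, `t = t₀ + ρ² T` with `ρ ≤ x₀`, the diffusion coefficient
is `1` and the nonlinear drift `2 n ρ / x` stays bounded, uniformly in `x₀`, `t₀` and `ρ`. -/
lemma IsKompSol.isParabolic_rescaled {n : ℝ → ℝ → ℝ} {n₀ : ℝ → ℝ} (hsol : IsKompSol n n₀) {M : ℝ}
    (hM0 : 0 ≤ M) (hM : ∀ x t : ℝ, 0 < x → 0 < t → n x t ≤ M) {x₀ t₀ ρ R : ℝ}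
    (hx₀ : 0 < x₀) (hx₀' : x₀ ≤ 1 / 2) (hρ : 0 < ρ) (hρx : ρ ≤ x₀) (hρt : ρ ^ 2 < t₀)
    (hR : ρ * R ≤ 1 / 2) (c : ℝ) :
    IsParabolic (fun Y T => n (x₀ * exp (ρ * Y)) (t₀ + ρ ^ 2 * T) - c)
      (fun Y T => ρ * (x₀ * exp (ρ * Y)) *
        deriv (fun y => n y (t₀ + ρ ^ 2 * T)) (x₀ * exp (ρ * Y)))
      (fun Y T => ρ ^ 2 * ((x₀ * exp (ρ * Y)) *
          deriv (fun y => n y (t₀ + ρ ^ 2 * T)) (x₀ * exp (ρ * Y)) +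
        (x₀ * exp (ρ * Y)) ^ 2 *
          deriv (deriv fun y => n y (t₀ + ρ ^ 2 * T)) (x₀ * exp (ρ * Y))))
      (fun Y T => ρ ^ 2 * deriv (fun τ => n (x₀ * exp (ρ * Y)) τ) (t₀ + ρ ^ 2 * T))
      R (1 + 4 * M) (2 * M * ρ ^ 2) := by
  have hxpos : ∀ Y : ℝ, 0 < x₀ * exp (ρ * Y) := fun Y => by positivity
  have htpos : ∀ T ∈ Icc (-1 : ℝ) 0, 0 < t₀ + ρ ^ 2 * T := by
    intro T hT
    have : 0 < ρ ^ 2 := by positivity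
    nlinarith [hT.1]
  have hX : ∀ Y : ℝ, HasDerivAt (fun Y => x₀ * exp (ρ * Y)) (ρ * (x₀ * exp (ρ * Y))) Y := by
    intro Y
    have := (((hasDerivAt_id Y).const_mul ρ).exp).const_mul x₀
    refine this.congr_deriv ?_
    simp
    ring
  refine ⟨?_, ?_, ?_, ?_, ?_⟩
  · refine ContinuousOn.sub ?_ continuousOn_const
    exact hsol.contOn.comp (f := fun p : ℝ × ℝ => (x₀ * exp (ρ * p.1), t₀ + ρ ^ 2 * p.2))
      (Continuous.continuousOn (by fun_prop)) fun p hp => ⟨hxpos p.1, htpos p.2 hp.2⟩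
  · intro Y _ T hT
    have h1 := (hsol.diff_x _ (htpos T hT) _ (hxpos Y)).hasDerivAt
    refine ((h1.comp Y (hX Y)).sub_const c).congr_deriv ?_
    ring
  · intro Y _ T hT
    have h1 := (hsol.diff_xx _ (htpos T hT) _ (hxpos Y)).hasDerivAt
    refine (((hX Y).const_mul ρ).mul (h1.comp Y (hX Y))).congr_deriv ?_
    simp only [Function.comp]
    ring
  · intro Y _ T hT
    have h1 := (hsol.diff_t _ (hxpos Y) _ (htpos T hT)).hasDerivAt
    have h2 : HasDerivAt (fun T : ℝ => t₀ + ρ ^ 2 * T) (ρ ^ 2 * 1) T :=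
      ((hasDerivAt_id T).const_mul (ρ ^ 2)).const_add t₀
    refine ((h1.comp T h2).sub_const c).congr_deriv ?_
    ring
  · intro Y hY T hT
    have hpde := hsol.pde_expanded (hxpos Y) (htpos T hT)
    have hexp : 1 / 2 < exp (ρ * Y) ∧ exp (ρ * Y) < 2 := by
      refine half_lt_exp_and_exp_lt_two ?_
      rw [abs_mul, abs_of_pos hρ]
      have : |Y| ≤ R := abs_le.2 hY
      exact (mul_le_mul_of_nonneg_left this hρ.le).trans hR
    have hx1 : x₀ * exp (ρ * Y) ≤ 1 := by nlinarith [hexp.2]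
    have hx2 : ρ ≤ 2 * (x₀ * exp (ρ * Y)) := by nlinarith [hexp.1]
    have hxp := hxpos Y
    have hn0 := hsol.nonneg _ _ hxp (htpos T hT)
    have hnM := hM _ _ hxp (htpos T hT)
    rw [hpde]
    generalize x₀ * exp (ρ * Y) = x at *
    generalize deriv (fun y => n y (t₀ + ρ ^ 2 * T)) x = p
    generalize n x (t₀ + ρ ^ 2 * T) = m at *
    generalize deriv (deriv fun y => n y (t₀ + ρ ^ 2 * T)) x = q
    have hsplit : ρ ^ 2 * (x ^ 2 * q + (x ^ 2 + 2 * m) * p + (2 * x - 2) * m) -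
        ρ ^ 2 * (x * p + x ^ 2 * q) =
        (ρ * (x - 1) + 2 * m * (ρ / x)) * (ρ * x * p) + ρ ^ 2 * (2 * x - 2) * m := by
      field_simp
      ring
    have hρx' : ρ / x ≤ 2 := by rw [div_le_iff₀ hxp]; exact hx2
    have hρx0 : 0 ≤ ρ / x := by positivity
    rw [hsplit]
    refine (abs_add_le _ _).trans (add_le_add ?_ ?_)
    · rw [abs_mul]
      refine mul_le_mul_of_nonneg_right ?_ (abs_nonneg _)
      have h1 : 2 * m * (ρ / x) ≤ 2 * M * 2 := by gcongr
      have h2 : 0 ≤ 2 * m * (ρ / x) := by positivity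
      rw [abs_le]
      constructor <;> nlinarith
    · rw [abs_le]
      have : 0 ≤ ρ ^ 2 := by positivity
      have h1 : 0 ≤ (1 - x) * m := mul_nonneg (by linarith) hn0
      have h2 : (1 - x) * m ≤ M := by nlinarith
      constructor <;> nlinarith [mul_nonneg this h1, mul_le_mul_of_nonneg_left h2 this]

/-- Bounded on times `t ≥ x²`, with an initial layer of size `x / √t` before. -/
lemma IsKompSol.deriv_bound {n : ℝ → ℝ → ℝ} {n₀ : ℝ → ℝ} (hsol : IsKompSol n n₀) :
    ∃ C : ℝ, 0 ≤ C ∧ ∀ x t : ℝ, 0 < x → x ≤ 1 / 2 → 0 < t →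
      x ^ 2 * |deriv (fun y => n y t) x| ≤ C * (1 + x * t ^ (-(1 / 2) : ℝ)) := by
  obtain ⟨M', hM'⟩ := hsol.bounded
  set M := max M' 0
  have hM0 : 0 ≤ M := le_max_right _ _
  have hM : ∀ x t : ℝ, 0 < x → 0 < t → n x t ≤ M := fun x t hx ht =>
    (hM' x t hx ht).trans (le_max_left _ _)
  set K := 4 * (1 + 4 * M + 1) * (M + 1) + 2 * M with hK
  have hK0 : 0 ≤ K := by positivity
  refine ⟨2 * K, by positivity, fun x t hx hx' ht => ?_⟩
  have hsq : 0 < √t := Real.sqrt_pos.2 ht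
  set ρ := min x (√t / 2) with hρdef
  have hρ : 0 < ρ := lt_min hx (by positivity)
  have hρx : ρ ≤ x := min_le_left _ _
  have hρ1 : ρ ≤ 1 / 2 := hρx.trans hx'
  have hρt : ρ ^ 2 < t := by
    have h1 : ρ ≤ √t / 2 := min_le_right _ _
    have h2 : √t ^ 2 = t := Real.sq_sqrt ht.le
    nlinarith
  have hpar := hsol.isParabolic_rescaled hM0 hM hx hx' hρ hρx hρt (R := 1) (by linarith) 0
  have hgrad := hpar.abs_gradient_le (ε := M + 1) (by positivity) (by positivity) (by positivity) ?_
  · simp only [mul_zero, exp_zero, mul_one, add_zero] at hgrad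
    rw [abs_mul, abs_of_pos (by positivity)] at hgrad
    have h1 : ρ * x * |deriv (fun y => n y t) x| ≤ K := by
      refine hgrad.trans ?_
      have : ρ ^ 2 ≤ 1 := by nlinarith
      have : 2 * M * ρ ^ 2 ≤ 2 * M * 1 := by gcongr
      linarith
    have h2 : x / ρ ≤ 2 * (1 + x * t ^ (-(1 / 2) : ℝ)) := by
      have h3 : t ^ (-(1 / 2) : ℝ) = (√t)⁻¹ := by
        rw [Real.rpow_neg ht.le, ← Real.sqrt_eq_rpow]
      rw [h3]
      have h4 : 0 ≤ x * (√t)⁻¹ := by positivity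
      rcases min_choice x (√t / 2) with h5 | h5
      · rw [hρdef, h5, div_self hx.ne']; linarith
      · rw [hρdef, h5]
        have : x / (√t / 2) = 2 * (x * (√t)⁻¹) := by field_simp
        linarith
    calc x ^ 2 * |deriv (fun y => n y t) x|
        = (ρ * x * |deriv (fun y => n y t) x|) * (x / ρ) := by field_simp
      _ ≤ K * (2 * (1 + x * t ^ (-(1 / 2) : ℝ))) :=
        mul_le_mul h1 h2 (by positivity) hK0
      _ = 2 * K * (1 + x * t ^ (-(1 / 2) : ℝ)) := by ring
  · intro Y _ T hT
    have htp : 0 < t + ρ ^ 2 * T := by nlinarith [hT.1, sq_nonneg ρ]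
    have hxp : 0 < x * exp (ρ * Y) := by positivity
    have := hsol.nonneg _ _ hxp htp
    have := hM _ _ hxp htp
    rw [sub_zero, abs_le]
    constructor <;> linarith

/-- The gradient at time `t` is controlled by the oscillation near `0` at time `t - x²`. -/
lemma IsKompSol.deriv_le_osc {n : ℝ → ℝ → ℝ} {n₀ : ℝ → ℝ} (hsol : IsKompSol n n₀) :
    ∃ C : ℝ, 0 ≤ C ∧ ∀ x t ε : ℝ, 0 < x → x ≤ 1 / 2 → x ^ 2 < t → 0 ≤ ε →
      (∀ z ∈ Ioo 0 (2 * x), |n z (t - x ^ 2) - n x (t - x ^ 2)| ≤ ε) →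
      x ^ 2 * |deriv (fun y => n y t) x| ≤ C * (ε + x) := by
  obtain ⟨M', hM'⟩ := hsol.bounded
  set M := max M' 0
  have hM0 : 0 ≤ M := le_max_right _ _
  have hM : ∀ x t : ℝ, 0 < x → 0 < t → n x t ≤ M := fun x t hx ht =>
    (hM' x t hx ht).trans (le_max_left _ _)
  set A := 4 * (1 + 4 * M + 1) with hA
  set D := 2 * M + (4 + 2 * (1 + 4 * M)) * (M + 1) * 2 with hD
  have hA0 : 0 ≤ A := by positivity
  have hD0 : 0 ≤ D := by positivity
  refine ⟨A * (1 + D) + 2 * M, by positivity, fun x t ε hx hx' hxt hε hosc => ?_⟩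
  set R : ℝ := 1 / (2 * x) with hRdef
  have hR1 : 1 ≤ R := by rw [hRdef, le_div_iff₀ (by positivity)]; linarith
  have hxR : x * R = 1 / 2 := by rw [hRdef]; field_simp
  set c := n x (t - x ^ 2) with hc
  have hpar := hsol.isParabolic_rescaled hM0 hM hx hx' hx le_rfl hxt (R := R) hxR.le c
  have hbd : ∀ Y ∈ Icc (-R) R, ∀ T ∈ Icc (-1 : ℝ) 0,
      |n (x * exp (x * Y)) (t + x ^ 2 * T) - c| ≤ M + 1 := by
    intro Y _ T hT
    have htp : 0 < t + x ^ 2 * T := by nlinarith [hT.1, sq_nonneg x]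
    have hxp : 0 < x * exp (x * Y) := by positivity
    have h1 := hsol.nonneg _ _ hxp htp
    have h2 := hM _ _ hxp htp
    have h3 := hsol.nonneg x (t - x ^ 2) hx (by linarith)
    have h4 := hM x (t - x ^ 2) hx (by linarith)
    rw [abs_le]
    constructor <;> linarith
  have hin : ∀ Y ∈ Icc (-R) R, |n (x * exp (x * Y)) (t + x ^ 2 * (-1)) - c| ≤ ε := by
    intro Y hY
    have h1 : exp (x * Y) < 2 := by
      refine (half_lt_exp_and_exp_lt_two ?_).2
      rw [abs_mul, abs_of_pos hx, ← hxR]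
      exact mul_le_mul_of_nonneg_left (abs_le.2 hY) hx.le
    have := hosc (x * exp (x * Y)) ⟨by positivity, by nlinarith⟩
    rwa [show t + x ^ 2 * (-1) = t - x ^ 2 by ring]
  have hB0 : 0 ≤ 1 + 4 * M := by positivity
  have hF0 : 0 ≤ 2 * M * x ^ 2 := by positivity
  have hM1 : 0 < M + 1 := by positivity
  have hup := hpar.upper_bound hR1 hB0 hF0 hM1 hε
    (fun Y hY T hT => (abs_le.1 (hbd Y hY T hT)).2) (fun Y hY => (abs_le.1 (hin Y hY)).2)
  have hlo := hpar.neg.upper_bound hR1 hB0 hF0 hM1 hε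
    (fun Y hY T hT => by linarith [(abs_le.1 (hbd Y hY T hT)).1])
    (fun Y hY => by linarith [(abs_le.1 (hin Y hY)).1])
  have hsmall : ε + 2 * M * x ^ 2 + (4 + 2 * (1 + 4 * M)) * (M + 1) / R ≤ ε + D * x := by
    have h1 : (4 + 2 * (1 + 4 * M)) * (M + 1) / R
        = (4 + 2 * (1 + 4 * M)) * (M + 1) * 2 * x := by rw [hRdef]; field_simp
    have h2 : x ^ 2 ≤ x := by nlinarith
    have h3 : 2 * M * x ^ 2 ≤ 2 * M * x := by gcongr
    rw [h1, hD]
    linarith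
  have hDx : 0 ≤ D * x := by positivity
  have hgrad := (hpar.mono hR1).abs_gradient_le (ε := ε + D * x + x) hB0 hF0 (by positivity) ?_
  · simp only [mul_zero, exp_zero, mul_one, add_zero] at hgrad
    rw [abs_mul, abs_of_pos (by positivity)] at hgrad
    have h2 : 2 * M * x ^ 2 ≤ 2 * M * x := by
      have : x ^ 2 ≤ x := by nlinarith
      gcongr
    calc x ^ 2 * |deriv (fun y => n y t) x| = x * x * |deriv (fun y => n y t) x| := by ring
      _ ≤ A * (ε + D * x + x) + 2 * M * x ^ 2 := hgrad
      _ ≤ (A * (1 + D) + 2 * M) * (ε + x) := by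
        have : 0 ≤ A * D * ε := by positivity
        have : 0 ≤ M * ε := by positivity
        linarith
  · intro Y hY T hT
    have h1 := hup Y hY T hT
    have h2 := hlo Y hY T hT
    rw [abs_le]
    constructor <;> linarith

/-! ### Measurability -/

lemma IsKompSol.aestronglyMeasurable {n : ℝ → ℝ → ℝ} {n₀ : ℝ → ℝ} (hsol : IsKompSol n n₀) {x : ℝ}
    (hx : 0 < x) : AEStronglyMeasurable (fun τ => n x τ) (volume.restrict (Ioi 0)) := by
  refine ContinuousOn.aestronglyMeasurable ?_ measurableSet_Ioi
  exact hsol.contOn.comp (f := fun τ : ℝ => (x, τ)) (Continuous.continuousOn (by fun_prop))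
    fun τ hτ => ⟨hx, hτ⟩

lemma IsKompSol.aestronglyMeasurable_deriv {n : ℝ → ℝ → ℝ} {n₀ : ℝ → ℝ} (hsol : IsKompSol n n₀)
    {x : ℝ} (hx : 0 < x) :
    AEStronglyMeasurable (fun τ => deriv (fun y => n y τ) x) (volume.restrict (Ioi 0)) := by
  have hseq : Tendsto (fun k : ℕ => x + 1 / ((k : ℝ) + 1)) atTop (𝓝[>] x) := by
    refine tendsto_nhdsWithin_iff.2 ⟨?_, Eventually.of_forall fun k => ?_⟩
    · simpa using tendsto_one_div_add_atTop_nhds_zero_nat.const_add x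
    · have : 0 < 1 / ((k : ℝ) + 1) := by positivity
      exact lt_add_of_pos_right x this
  refine aestronglyMeasurable_of_tendsto_ae atTop
    (f := fun (k : ℕ) τ => slope (fun y => n y τ) x (x + 1 / ((k : ℝ) + 1))) ?_ ?_
  · intro k
    simp only [slope_def_field, div_eq_mul_inv]
    exact ((hsol.aestronglyMeasurable (by positivity)).sub
      (hsol.aestronglyMeasurable hx)).mul_const _
  · filter_upwards [ae_restrict_mem measurableSet_Ioi] with τ hτ
    exact ((hasDerivAt_iff_tendsto_slope_left_right.1
      (hsol.diff_x τ hτ x hx).hasDerivAt).2).comp hseq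

/-- The oscillation of `n(·,τ)` on `(0, 2x)` about `n(x,τ)`; the supremum runs over rational
points, so that it is visibly measurable in `τ`. -/
noncomputable def osc (n : ℝ → ℝ → ℝ) (x τ : ℝ) : ℝ :=
  ⨆ q : {q : ℚ // 0 < (q : ℝ) ∧ (q : ℝ) < 2 * x}, |n (q : ℚ) τ - n x τ|

lemma osc_nonneg (n : ℝ → ℝ → ℝ) (x τ : ℝ) : 0 ≤ osc n x τ :=
  Real.iSup_nonneg fun _ => abs_nonneg _

lemma IsKompSol.aestronglyMeasurable_osc {n : ℝ → ℝ → ℝ} {n₀ : ℝ → ℝ} (hsol : IsKompSol n n₀)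
    {x : ℝ} (hx : 0 < x) : AEStronglyMeasurable (osc n x) (volume.restrict (Ioi 0)) := by
  refine AEMeasurable.aestronglyMeasurable (AEMeasurable.iSup fun q => ?_)
  exact ((hsol.aestronglyMeasurable q.2.1).sub (hsol.aestronglyMeasurable hx)).norm.aemeasurable

lemma IsKompSol.abs_sub_le {n : ℝ → ℝ → ℝ} {n₀ : ℝ → ℝ} (hsol : IsKompSol n n₀) {M : ℝ}
    (hM : ∀ x t : ℝ, 0 < x → 0 < t → n x t ≤ M) {x z τ : ℝ} (hx : 0 < x) (hz : 0 < z)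
    (hτ : 0 < τ) : |n z τ - n x τ| ≤ M := by
  have h1 := hsol.nonneg x τ hx hτ
  have h2 := hsol.nonneg z τ hz hτ
  have h3 := hM x τ hx hτ
  have h4 := hM z τ hz hτ
  rw [abs_le]
  constructor <;> linarith

lemma IsKompSol.osc_le {n : ℝ → ℝ → ℝ} {n₀ : ℝ → ℝ} (hsol : IsKompSol n n₀) {M : ℝ} (hM0 : 0 ≤ M)
    (hM : ∀ x t : ℝ, 0 < x → 0 < t → n x t ≤ M) {x τ : ℝ} (hx : 0 < x) (hτ : 0 < τ) :
    osc n x τ ≤ M :=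
  Real.iSup_le (fun q => hsol.abs_sub_le hM hx q.2.1 hτ) hM0

lemma IsKompSol.abs_sub_le_osc {n : ℝ → ℝ → ℝ} {n₀ : ℝ → ℝ} (hsol : IsKompSol n n₀) {M : ℝ}
    (hM : ∀ x t : ℝ, 0 < x → 0 < t → n x t ≤ M) {x z τ : ℝ} (hx : 0 < x) (hτ : 0 < τ)
    (hz : z ∈ Ioo 0 (2 * x)) : |n z τ - n x τ| ≤ osc n x τ := by
  by_contra! hlt
  have hcont : ContinuousAt (fun y => |n y τ - n x τ|) z :=
    (((hsol.diff_x τ hτ z hz.1).continuousAt).sub continuousAt_const).abs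
  have hnear : ∀ᶠ y in 𝓝 z, y ∈ Ioo 0 (2 * x) ∧ osc n x τ < |n y τ - n x τ| := by
    filter_upwards [Ioo_mem_nhds hz.1 hz.2, hcont.eventually_const_lt hlt] with y h1 h2
      using ⟨h1, h2⟩
  obtain ⟨q, hq⟩ := Rat.denseRange_cast.exists_mem_open isOpen_interior
    ⟨z, mem_interior_iff_mem_nhds.2 hnear⟩
  obtain ⟨hq1, hq2⟩ := interior_subset hq
  have hbdd : BddAbove (range fun q : {q : ℚ // 0 < (q : ℝ) ∧ (q : ℝ) < 2 * x} =>
      |n (q : ℚ) τ - n x τ|) :=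
    ⟨M, by rintro _ ⟨q, rfl⟩; exact hsol.abs_sub_le hM hx q.2.1 hτ⟩
  exact absurd (le_ciSup hbdd ⟨q, hq1⟩) (not_le.2 hq2)

lemma tendsto_osc {n : ℝ → ℝ → ℝ} {τ β : ℝ}
    (hb : Tendsto (fun x => n x τ) (𝓝[>] (0:ℝ)) (𝓝 β)) :
    Tendsto (fun x => osc n x τ) (𝓝[>] (0:ℝ)) (𝓝 0) := by
  refine Metric.tendsto_nhds.2 fun η hη => ?_
  have h1 := Metric.tendsto_nhds.1 hb (η / 4) (by positivity)
  obtain ⟨d, hd, hd'⟩ := mem_nhdsGT_iff_exists_Ioo_subset.1 h1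
  have hd0 : 0 < d := hd
  filter_upwards [Ioo_mem_nhdsGT (half_pos hd0)] with x hx
  rw [Real.dist_eq, sub_zero, abs_of_nonneg (osc_nonneg n x τ)]
  refine lt_of_le_of_lt (Real.iSup_le (a := η / 2) (fun q => ?_) (by positivity)) (by linarith)
  have h2 : dist (n (q : ℚ) τ) β < η / 4 := hd' ⟨q.2.1, by linarith [q.2.2, hx.2]⟩
  have h3 : dist (n x τ) β < η / 4 := hd' ⟨hx.1, by linarith [hx.2, hd0]⟩
  rw [← Real.dist_eq]
  linarith [dist_triangle_right (n (q : ℚ) τ) (n x τ) β]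

/-! ### Convergence of the diffusive flux -/

lemma uIoc_subset_Ioi {s t : ℝ} (hs : 0 ≤ s) (hst : s ≤ t) : uIoc s t ⊆ Ioi 0 := by
  rw [uIoc_of_le hst]
  exact fun τ hτ => hs.trans_lt hτ.1

lemma IsKompSol.intervalIntegrable_deriv {n : ℝ → ℝ → ℝ} {n₀ : ℝ → ℝ} (hsol : IsKompSol n n₀)
    {x s t : ℝ} (hx : 0 < x) (hx' : x ≤ 1 / 2) (hs : 0 ≤ s) (hst : s ≤ t) :
    IntervalIntegrable (fun τ => x ^ 2 * deriv (fun y => n y τ) x) volume s t := by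
  obtain ⟨C, hC0, hC⟩ := hsol.deriv_bound
  have hrp : IntervalIntegrable (fun τ : ℝ => x * τ ^ (-(1 / 2) : ℝ)) volume s t :=
    (intervalIntegral.intervalIntegrable_rpow' (by norm_num)).const_mul x
  have hone : IntervalIntegrable (fun _ : ℝ => (1 : ℝ)) volume s t := intervalIntegrable_const
  have hg : IntervalIntegrable (fun τ : ℝ => C * (1 + x * τ ^ (-(1 / 2) : ℝ))) volume s t :=
    (hone.add hrp).const_mul C
  refine hg.mono_fun' ?_ ?_
  · exact ((hsol.aestronglyMeasurable_deriv hx).mono_measure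
      (Measure.restrict_mono (uIoc_subset_Ioi hs hst) le_rfl)).const_mul _
  · filter_upwards [ae_restrict_mem measurableSet_uIoc] with τ hτ
    rw [norm_mul, Real.norm_of_nonneg (sq_nonneg x), Real.norm_eq_abs]
    exact hC x τ hx hx' (uIoc_subset_Ioi hs hst hτ)

lemma IsKompSol.tendsto_deriv_pos {n : ℝ → ℝ → ℝ} {n₀ : ℝ → ℝ} (hsol : IsKompSol n n₀)
    {b : ℝ → ℝ} (hb : ∀ t : ℝ, 0 < t → Tendsto (fun x => n x t) (𝓝[>] (0:ℝ)) (𝓝 (b t)))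
    {s t : ℝ} (hs : 0 < s) (hst : s ≤ t) :
    Tendsto (fun x => ∫ τ in s..t, x ^ 2 * |deriv (fun y => n y τ) x|) (𝓝[>] (0:ℝ)) (𝓝 0) := by
  obtain ⟨M', hM'⟩ := hsol.bounded
  set M := max M' 0
  have hM0 : 0 ≤ M := le_max_right _ _
  have hM : ∀ x t : ℝ, 0 < x → 0 < t → n x t ≤ M := fun x t hx ht =>
    (hM' x t hx ht).trans (le_max_left _ _)
  obtain ⟨C, hC0, hC⟩ := hsol.deriv_le_osc
  have hst2 : s / 2 ≤ t := by linarith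
  have hmeas : ∀ x, 0 < x → ∀ a c : ℝ, 0 ≤ a → a ≤ c →
      AEStronglyMeasurable (osc n x) (volume.restrict (uIoc a c)) := fun x hx a c ha hac =>
    (hsol.aestronglyMeasurable_osc hx).mono_measure
      (Measure.restrict_mono (uIoc_subset_Ioi ha hac) le_rfl)
  have hoi : ∀ x, 0 < x → ∀ a c : ℝ, 0 ≤ a → a ≤ c →
      IntervalIntegrable (osc n x) volume a c := by
    intro x hx a c ha hac
    refine (intervalIntegrable_const (c := M)).mono_fun' (hmeas x hx a c ha hac) ?_
    filter_upwards [ae_restrict_mem measurableSet_uIoc] with τ hτ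
    rw [Real.norm_of_nonneg (osc_nonneg n x τ)]
    exact hsol.osc_le hM0 hM hx (uIoc_subset_Ioi ha hac hτ)
  have hosc : Tendsto (fun x => ∫ τ in (s / 2)..t, osc n x τ) (𝓝[>] (0:ℝ)) (𝓝 0) := by
    have h0 : (0 : ℝ) = ∫ _τ in (s / 2)..t, (0 : ℝ) := by simp
    have hc : IntervalIntegrable (fun _ : ℝ => M) volume (s / 2) t := intervalIntegrable_const
    nth_rewrite 3 [h0]
    refine intervalIntegral.tendsto_integral_filter_of_dominated_convergence (fun _ => M) ?_ ?_
      hc ?_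
    · filter_upwards [self_mem_nhdsWithin] with x hx
      exact hmeas x hx _ _ (by positivity) hst2
    · filter_upwards [self_mem_nhdsWithin] with x hx
      refine Eventually.of_forall fun τ hτ => ?_
      rw [Real.norm_of_nonneg (osc_nonneg n x τ)]
      exact hsol.osc_le hM0 hM hx (uIoc_subset_Ioi (by positivity) hst2 hτ)
    · exact Eventually.of_forall fun τ hτ =>
        tendsto_osc (hb τ (uIoc_subset_Ioi (by positivity) hst2 hτ))
  have hid : Tendsto (fun x : ℝ => x) (𝓝[>] (0:ℝ)) (𝓝 0) := nhdsWithin_le_nhds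
  have hlim : Tendsto (fun x => C * ((∫ τ in (s / 2)..t, osc n x τ) + (t - s) * x))
      (𝓝[>] (0:ℝ)) (𝓝 0) := by
    have := (hosc.add (hid.const_mul (t - s))).const_mul C
    simpa using this
  refine tendsto_of_tendsto_of_tendsto_of_le_of_le' tendsto_const_nhds hlim ?_ ?_
  · exact Eventually.of_forall fun x =>
      intervalIntegral.integral_nonneg hst fun τ _ => by positivity
  · have hd : 0 < min (1 / 2) (s / 2) := lt_min (by norm_num) (by positivity)
    filter_upwards [Ioo_mem_nhdsGT hd] with x hx
    have hx0 : 0 < x := hx.1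
    have hx1 : x ≤ 1 / 2 := hx.2.le.trans (min_le_left _ _)
    have hx2 : x < s / 2 := hx.2.trans_le (min_le_right _ _)
    have hx3 : x ^ 2 < s / 2 := by nlinarith
    have hsh : IntervalIntegrable (fun τ => osc n x (τ - x ^ 2)) volume s t := by
      have := (hoi x hx0 (s - x ^ 2) (t - x ^ 2) (by linarith) (by linarith)).comp_sub_right (x ^ 2)
      simpa using this
    calc ∫ τ in s..t, x ^ 2 * |deriv (fun y => n y τ) x|
        ≤ ∫ τ in s..t, C * (osc n x (τ - x ^ 2) + x) := by
          refine intervalIntegral.integral_mono_on hst ?_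
            ((hsh.add intervalIntegrable_const).const_mul C) ?_
          · have := (hsol.intervalIntegrable_deriv hx0 hx1 hs.le hst).abs
            refine this.congr ?_
            intro τ _
            simp [abs_mul]
          · intro τ hτ
            exact hC x τ _ hx0 hx1 (by linarith [hτ.1]) (osc_nonneg n x _)
              fun z hz => hsol.abs_sub_le_osc hM hx0 (by linarith [hτ.1]) hz
      _ = C * ((∫ τ in (s - x ^ 2)..(t - x ^ 2), osc n x τ) + (t - s) * x) := by
          rw [intervalIntegral.integral_const_mul,
            intervalIntegral.integral_add hsh intervalIntegrable_const,
            intervalIntegral.integral_comp_sub_right (osc n x), intervalIntegral.integral_const,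
            smul_eq_mul]
      _ ≤ C * ((∫ τ in (s / 2)..t, osc n x τ) + (t - s) * x) := by
          gcongr
          exact intervalIntegral.integral_mono_interval (by linarith) (by linarith)
            (by nlinarith) (Eventually.of_forall fun τ => osc_nonneg n x τ)
            (hoi x hx0 _ _ (by positivity) hst2)

lemma IsKompSol.tendsto_deriv {n : ℝ → ℝ → ℝ} {n₀ : ℝ → ℝ} (hsol : IsKompSol n n₀)
    {b : ℝ → ℝ} (hb : ∀ t : ℝ, 0 < t → Tendsto (fun x => n x t) (𝓝[>] (0:ℝ)) (𝓝 (b t)))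
    {s t : ℝ} (hs : 0 ≤ s) (hst : s ≤ t) :
    Tendsto (fun x => ∫ τ in s..t, x ^ 2 * |deriv (fun y => n y τ) x|) (𝓝[>] (0:ℝ)) (𝓝 0) := by
  rcases hs.lt_or_eq with hs' | rfl
  · exact hsol.tendsto_deriv_pos hb hs' hst
  rcases hst.lt_or_eq with ht | rfl
  swap
  · simp
  obtain ⟨C, hC0, hC⟩ := hsol.deriv_bound
  refine Metric.tendsto_nhds.2 fun η hη => ?_
  -- The initial layer `(0, δ)` contributes at most `C δ + o(1) < η`.
  set δ := min t (η / (C + 1)) with hδ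
  have hδ0 : 0 < δ := lt_min ht (by positivity)
  have hδt : δ ≤ t := min_le_left _ _
  have hCδ : C * δ < η := by
    have h1 : δ ≤ η / (C + 1) := min_le_right _ _
    rw [le_div_iff₀ (by positivity)] at h1
    nlinarith
  set A : ℝ := ∫ τ in (0:ℝ)..δ, τ ^ (-(1 / 2) : ℝ) with hA
  have hid : Tendsto (fun x : ℝ => x) (𝓝[>] (0:ℝ)) (𝓝 0) := nhdsWithin_le_nhds
  have hlim : Tendsto (fun x => C * (δ + x * A) +
      ∫ τ in δ..t, x ^ 2 * |deriv (fun y => n y τ) x|) (𝓝[>] (0:ℝ)) (𝓝 (C * δ)) := by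
    have := (((hid.mul_const A).const_add δ).const_mul C).add
      (hsol.tendsto_deriv_pos hb hδ0 hδt)
    simpa using this
  filter_upwards [hlim.eventually_lt_const hCδ,
    Ioo_mem_nhdsGT (by norm_num : (0:ℝ) < 1 / 2)] with x hlt hx
  have hintegr : ∀ a c : ℝ, 0 ≤ a → a ≤ c →
      IntervalIntegrable (fun τ => x ^ 2 * |deriv (fun y => n y τ) x|) volume a c := by
    intro a c ha hac
    refine (hsol.intervalIntegrable_deriv hx.1 hx.2.le ha hac).abs.congr ?_
    intro τ _
    simp [abs_mul]
  have hnn : 0 ≤ ∫ τ in (0:ℝ)..t, x ^ 2 * |deriv (fun y => n y τ) x| :=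
    intervalIntegral.integral_nonneg hst fun τ _ => by positivity
  rw [Real.dist_eq, sub_zero, abs_of_nonneg hnn,
    ← intervalIntegral.integral_add_adjacent_intervals (hintegr 0 δ le_rfl hδ0.le)
      (hintegr δ t hδ0.le hδt)]
  refine lt_of_le_of_lt (add_le_add_left ?_ _) hlt
  have hrp : IntervalIntegrable (fun τ : ℝ => x * τ ^ (-(1 / 2) : ℝ)) volume 0 δ :=
    (intervalIntegral.intervalIntegrable_rpow' (by norm_num)).const_mul x
  have hbound : ∫ τ in (0:ℝ)..δ, C * (1 + x * τ ^ (-(1 / 2) : ℝ)) = C * (δ + x * A) := by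
    rw [intervalIntegral.integral_const_mul,
      intervalIntegral.integral_add intervalIntegrable_const hrp,
      intervalIntegral.integral_const_mul]
    simp [hA]
  rw [← hbound]
  have hone : IntervalIntegrable (fun _ : ℝ => (1 : ℝ)) volume 0 δ := intervalIntegrable_const
  refine (Real.le_norm_self _).trans ?_
  refine intervalIntegral.norm_integral_le_of_norm_le hδ0.le
    (Eventually.of_forall fun τ hτ => ?_) ((hone.add hrp).const_mul C)
  rw [Real.norm_of_nonneg (by positivity)]
  exact hC x τ hx.1 hx.2.le hτ.1

/-- The flux converges to `b²` in `L¹(s,t)`, down to the initial time, and so does its integral. -/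
lemma IsKompSol.tendsto_flux {n : ℝ → ℝ → ℝ} {n₀ : ℝ → ℝ} (hsol : IsKompSol n n₀)
    {b : ℝ → ℝ} (hb : ∀ t : ℝ, 0 < t → Tendsto (fun x => n x t) (𝓝[>] (0:ℝ)) (𝓝 (b t)))
    {s t : ℝ} (hs : 0 ≤ s) (hst : s ≤ t) :
    Tendsto (fun x => ∫ τ in s..t, |kompFlux (fun z => n z τ) x - b τ ^ 2|)
        (𝓝[>] (0:ℝ)) (𝓝 0) ∧
      Tendsto (fun x => ∫ τ in s..t, kompFlux (fun z => n z τ) x)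
        (𝓝[>] (0:ℝ)) (𝓝 (∫ τ in s..t, b τ ^ 2)) := by
  obtain ⟨M', hM'⟩ := hsol.bounded
  set M := max M' 0
  have hM0 : 0 ≤ M := le_max_right _ _
  have hM : ∀ x t : ℝ, 0 < x → 0 < t → n x t ≤ M := fun x t hx ht =>
    (hM' x t hx ht).trans (le_max_left _ _)
  have hpos : ∀ τ ∈ uIoc s t, 0 < τ := uIoc_subset_Ioi hs hst
  have hrestr : volume.restrict (uIoc s t) ≤ volume.restrict (Ioi (0:ℝ)) :=
    Measure.restrict_mono (uIoc_subset_Ioi hs hst) le_rfl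
  have hnmeas : ∀ x, 0 < x → AEStronglyMeasurable (fun τ => n x τ)
      (volume.restrict (uIoc s t)) := fun x hx =>
    (hsol.aestronglyMeasurable hx).mono_measure hrestr
  have hb0 : ∀ τ, 0 < τ → 0 ≤ b τ ∧ b τ ≤ M := by
    intro τ hτ
    constructor
    · refine ge_of_tendsto (hb τ hτ) ?_
      filter_upwards [self_mem_nhdsWithin] with x hx using hsol.nonneg x τ hx hτ
    · refine le_of_tendsto (hb τ hτ) ?_
      filter_upwards [self_mem_nhdsWithin] with x hx using hM x τ hx hτ
  have hbmeas : AEStronglyMeasurable b (volume.restrict (uIoc s t)) := by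
    refine aestronglyMeasurable_of_tendsto_ae atTop
      (f := fun (k : ℕ) τ => n (1 / ((k : ℝ) + 1)) τ) (fun k => hnmeas _ (by positivity)) ?_
    filter_upwards [ae_restrict_mem measurableSet_uIoc] with τ hτ
    refine (hb τ (hpos τ hτ)).comp (tendsto_nhdsWithin_iff.2
      ⟨tendsto_one_div_add_atTop_nhds_zero_nat, Eventually.of_forall fun k => ?_⟩)
    have : 0 < 1 / ((k : ℝ) + 1) := by positivity
    exact this
  have hbint : IntervalIntegrable (fun τ => b τ ^ 2) volume s t := by
    refine (intervalIntegrable_const (c := M ^ 2)).mono_fun' (hbmeas.pow 2) ?_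
    filter_upwards [ae_restrict_mem measurableSet_uIoc] with τ hτ
    obtain ⟨h1, h2⟩ := hb0 τ (hpos τ hτ)
    rw [Real.norm_of_nonneg (sq_nonneg _)]
    gcongr
  have hnint : ∀ x, 0 < x → IntervalIntegrable (fun τ => n x τ) volume s t := by
    intro x hx
    refine (intervalIntegrable_const (c := M)).mono_fun' (hnmeas x hx) ?_
    filter_upwards [ae_restrict_mem measurableSet_uIoc] with τ hτ
    rw [Real.norm_of_nonneg (hsol.nonneg x τ hx (hpos τ hτ))]
    exact hM x τ hx (hpos τ hτ)
  have hn2int : ∀ x, 0 < x → IntervalIntegrable (fun τ => n x τ ^ 2) volume s t := by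
    intro x hx
    refine (intervalIntegrable_const (c := M ^ 2)).mono_fun' ((hnmeas x hx).pow 2) ?_
    filter_upwards [ae_restrict_mem measurableSet_uIoc] with τ hτ
    have h1 := hsol.nonneg x τ hx (hpos τ hτ)
    have h2 := hM x τ hx (hpos τ hτ)
    rw [Real.norm_of_nonneg (sq_nonneg _)]
    gcongr
  have hJint : ∀ x, 0 < x → x ≤ 1 / 2 →
      IntervalIntegrable (fun τ => kompFlux (fun z => n z τ) x) volume s t := fun x hx hx' =>
    ((hsol.intervalIntegrable_deriv hx hx' hs hst).add
      ((hnint x hx).const_mul (x ^ 2 - 2 * x))).add (hn2int x hx)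
  have hsq : Tendsto (fun x => ∫ τ in s..t, |n x τ ^ 2 - b τ ^ 2|) (𝓝[>] (0:ℝ)) (𝓝 0) := by
    have h0 : (0 : ℝ) = ∫ _τ in s..t, (0 : ℝ) := by simp
    have hc : IntervalIntegrable (fun _ : ℝ => M ^ 2) volume s t := intervalIntegrable_const
    nth_rewrite 3 [h0]
    refine intervalIntegral.tendsto_integral_filter_of_dominated_convergence (fun _ => M ^ 2)
      ?_ ?_ hc ?_
    · filter_upwards [self_mem_nhdsWithin] with x hx
      exact (((hnmeas x hx).pow 2).sub (hbmeas.pow 2)).norm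
    · filter_upwards [self_mem_nhdsWithin] with x hx
      refine Eventually.of_forall fun τ hτ => ?_
      have h1 := hsol.nonneg x τ hx (hpos τ hτ)
      have h2 := hM x τ hx (hpos τ hτ)
      obtain ⟨h3, h4⟩ := hb0 τ (hpos τ hτ)
      rw [Real.norm_eq_abs, abs_abs, abs_le]
      constructor <;> nlinarith
    · refine Eventually.of_forall fun τ hτ => ?_
      have := (((hb τ (hpos τ hτ)).pow 2).sub_const (b τ ^ 2)).abs
      simpa using this
  have hid : Tendsto (fun x : ℝ => x) (𝓝[>] (0:ℝ)) (𝓝 0) := nhdsWithin_le_nhds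
  have hlim : Tendsto (fun x => (∫ τ in s..t, x ^ 2 * |deriv (fun y => n y τ) x|)
      + (t - s) * (2 * M * x) + ∫ τ in s..t, |n x τ ^ 2 - b τ ^ 2|) (𝓝[>] (0:ℝ)) (𝓝 0) := by
    have := ((hsol.tendsto_deriv hb hs hst).add
      ((hid.const_mul (2 * M)).const_mul (t - s))).add hsq
    simpa using this
  have hsmall : ∀ᶠ x : ℝ in 𝓝[>] 0, x ∈ Ioo (0:ℝ) (1 / 2) :=
    Ioo_mem_nhdsGT (by norm_num : (0:ℝ) < 1 / 2)
  have hstrong : Tendsto (fun x => ∫ τ in s..t, |kompFlux (fun z => n z τ) x - b τ ^ 2|)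
      (𝓝[>] (0:ℝ)) (𝓝 0) := by
    refine tendsto_of_tendsto_of_tendsto_of_le_of_le' tendsto_const_nhds hlim ?_ ?_
    · exact Eventually.of_forall fun x =>
        intervalIntegral.integral_nonneg hst fun τ _ => abs_nonneg _
    · filter_upwards [hsmall] with x hx
      have hd : IntervalIntegrable (fun τ => x ^ 2 * |deriv (fun y => n y τ) x|) volume s t := by
        refine (hsol.intervalIntegrable_deriv hx.1 hx.2.le hs hst).abs.congr ?_
        intro τ _
        simp [abs_mul]
      have hq := ((hn2int x hx.1).sub hbint).abs
      have hc : IntervalIntegrable (fun _ : ℝ => 2 * M * x) volume s t := intervalIntegrable_const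
      have hconst : (t - s) * (2 * M * x) = ∫ _τ in s..t, 2 * M * x := by
        rw [intervalIntegral.integral_const, smul_eq_mul]
      rw [hconst, ← intervalIntegral.integral_add hd hc,
        ← intervalIntegral.integral_add (hd.add hc) hq]
      refine (Real.le_norm_self _).trans ?_
      refine intervalIntegral.norm_integral_le_of_norm_le hst
        (Eventually.of_forall fun τ hτ => ?_) ((hd.add hc).add hq)
      have hτ0 : 0 < τ := hs.trans_lt hτ.1
      have h1 := hsol.nonneg x τ hx.1 hτ0
      have h2 := hM x τ hx.1 hτ0
      have h3 : |(x ^ 2 - 2 * x) * n x τ| ≤ 2 * M * x := by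
        have hx0 := hx.1
        have hx1 := hx.2
        have h4 : 0 ≤ (2 * x - x ^ 2) * n x τ := mul_nonneg (by nlinarith) h1
        have h5 : (2 * x - x ^ 2) * n x τ ≤ (2 * x) * M := by
          apply mul_le_mul _ h2 h1 (by positivity)
          nlinarith
        rw [abs_le]
        constructor <;> nlinarith
      rw [Real.norm_eq_abs, abs_abs]
      have h6 : kompFlux (fun z => n z τ) x - b τ ^ 2 = x ^ 2 * deriv (fun y => n y τ) x
          + (x ^ 2 - 2 * x) * n x τ + (n x τ ^ 2 - b τ ^ 2) := by
        simp only [kompFlux]; ring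
      rw [h6]
      refine (abs_add_three _ _ _).trans ?_
      have h7 : |x ^ 2 * deriv (fun y => n y τ) x| = x ^ 2 * |deriv (fun y => n y τ) x| := by
        rw [abs_mul, abs_of_nonneg (sq_nonneg x)]
      rw [h7]
      gcongr
  refine ⟨hstrong, ?_⟩
  refine tendsto_iff_norm_sub_tendsto_zero.2 (squeeze_zero' (Eventually.of_forall fun x =>
    norm_nonneg _) ?_ hstrong)
  filter_upwards [hsmall] with x hx
  rw [← intervalIntegral.integral_sub (hJint x hx.1 hx.2.le) hbint]
  exact intervalIntegral.norm_integral_le_integral_norm hst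

theorem flux_behavior_at_zero
    (n : ℝ → ℝ → ℝ) (n₀ : ℝ → ℝ)
    (hsol : IsKompSol n n₀)
    (h0nonneg : ∀ x : ℝ, 0 < x → 0 ≤ n₀ x)
    (h0bdd : ∃ C : ℝ, ∀ x : ℝ, 0 < x → n₀ x ≤ C)
    (h0decay : Filter.Tendsto (fun x => x ^ 2 * n₀ x) Filter.atTop (nhds 0))
    (b : ℝ → ℝ)
    (hb : ∀ t : ℝ, 0 < t →
      Filter.Tendsto (fun x => n x t) (𝓝[>] (0:ℝ)) (nhds (b t)))
    :
    (∀ s t : ℝ, 0 ≤ s → s ≤ t →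
      Filter.Tendsto (fun x => ∫ τ in s..t, kompFlux (fun z => n z τ) x)
        (𝓝[>] (0:ℝ)) (nhds (∫ τ in s..t, b τ ^ 2))) ∧
    (∀ s t : ℝ, 0 < s → s ≤ t →
      Filter.Tendsto (fun x => ∫ τ in s..t, x ^ 2 * |deriv (fun y => n y τ) x|)
        (𝓝[>] (0:ℝ)) (nhds 0) ∧
      Filter.Tendsto (fun x => ∫ τ in s..t, |kompFlux (fun z => n z τ) x - b τ ^ 2|)
        (𝓝[>] (0:ℝ)) (nhds 0)) := by
  exact ⟨fun s t hs hst => (hsol.tendsto_flux hb hs hst).2, fun s t hs hst =>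
    ⟨hsol.tendsto_deriv hb hs.le hst, (hsol.tendsto_flux hb hs.le hst).1⟩⟩
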